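/- arXiv:2308.04130 — 2 statements merged into one kernel-verified Lean document; each statement's English description precedes it below -/
import Mathlib

section
/- Let c be in the Tehranchi space 𝕔 and let a, b, α, β ≥ 0 be such that c(a) > 0 and c(a + α·b) > 0. Then 𝕍_{b,β}(𝕍_{a,α} c) = 𝕍_{a+α·b, α·β} c, i.e. for all m ≥ 0, (𝕍_{a,α}c)(b + β·m)/(𝕍_{a,α}c)(b) = c(a + α·b + α·β·m)/c(a + α·b). Furthermore, if c is differentiable, α ≤ -c(a)/c'(a) and β ≤ -(𝕍_{a,α}c)(b) / (d/dm)(𝕍_{a,α}c)(b), then α·β ≤ -c(a + α·b)/c'(a + α·b). -/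
/-- The Tehranchi space: convex functions `c` with `(1 - m)₊ ≤ c m ≤ 1` for `m ≥ 0`. -/
def TehranchiSpace (c : ℝ → ℝ) : Prop :=
  ConvexOn ℝ (Set.Ici 0) c ∧ ∀ m : ℝ, 0 ≤ m → max (1 - m) 0 ≤ c m ∧ c m ≤ 1

/-!
The bound `-c / c'` is `-(logDeriv c)⁻¹`. Dividing by the constant `c k` leaves the logarithmic
derivative unchanged, and the substitution `m ↦ k + α * m` multiplies it by `α`. Hence for `α ≠ 0`
the bound for `𝕍_{a,α} c` at `b` is `α⁻¹` times the bound for `c` at `a + α * b`. For `α = 0`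
the claim is that `-c / c'` is nonnegative there, `c` being positive and decreasing.
-/

/-- The transform `𝕍_{k,α} c`, which recentres `c` at `k`, rescales its argument by `α` and
normalises its value at `0` to `1`. If `c k = 0`, it is the zero function. -/
def tehranchiTransform {K : Type*} [Field K] (k α : K) (c : K → K) : K → K :=
  fun m => c (k + α * m) / c k

theorem tehranchiTransform_tehranchiTransform {K : Type*} [Field K] {c : K → K} {a : K}
    (hca : c a ≠ 0) (b α β : K) :
    tehranchiTransform b β (tehranchiTransform a α c)
      = tehranchiTransform (a + α * b) (α * β) c := by
  funext m
  simp only [tehranchiTransform, div_div_div_cancel_right₀ hca, mul_add, add_assoc, mul_assoc]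

section Derivative

variable {𝕜 : Type*} [NontriviallyNormedField 𝕜]

theorem deriv_tehranchiTransform (c : 𝕜 → 𝕜) (k α m : 𝕜) :
    deriv (tehranchiTransform k α c) m = α * deriv c (k + α * m) / c k := by
  have hchain : deriv (fun m => c (k + α * m)) m = α * deriv c (k + α * m) := by
    rw [deriv_comp_mul_left α (fun x => c (k + x)), deriv_comp_const_add, smul_eq_mul]
  change deriv (fun m => c (k + α * m) / c k) m = _
  rw [deriv_div_const, hchain]

theorem logDeriv_tehranchiTransform {c : 𝕜 → 𝕜} {k : 𝕜} (hck : c k ≠ 0) (α m : 𝕜) :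
    logDeriv (tehranchiTransform k α c) m = α * logDeriv c (k + α * m) := by
  rw [logDeriv_apply, logDeriv_apply, deriv_tehranchiTransform, tehranchiTransform,
    div_div_div_cancel_right₀ hck, mul_div_assoc]

end Derivative

theorem mul_le_neg_inv_of_le_neg_inv_mul {K : Type*} [Field K] [LinearOrder K]
    [IsStrictOrderedRing K] {α β l : K} (hα : 0 ≤ α) (hl : l ≤ 0) (hβ : β ≤ -(α * l)⁻¹) :
    α * β ≤ -l⁻¹ := by
  rcases hα.eq_or_lt with rfl | hpos
  · rw [zero_mul]
    exact neg_nonneg.mpr (inv_nonpos.mpr hl)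
  · calc
      α * β ≤ α * -(α * l)⁻¹ := mul_le_mul_of_nonneg_left hβ hα
      _ = -l⁻¹ := by rw [mul_neg, mul_inv, mul_inv_cancel_left₀ hpos.ne']

theorem Vka_semigroup_general {c : ℝ → ℝ} {a b α β : ℝ} (hα : 0 ≤ α)
    (hca : c a ≠ 0) (hcab : 0 < c (a + α * b)) :
    tehranchiTransform b β (tehranchiTransform a α c)
        = tehranchiTransform (a + α * b) (α * β) c ∧
      ∀ g : ℝ, HasDerivAt c g (a + α * b) → g < 0 →
        β ≤ -(tehranchiTransform a α c b / deriv (tehranchiTransform a α c) b) →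
        α * β ≤ -c (a + α * b) / g := by
  refine ⟨tehranchiTransform_tehranchiTransform hca b α β, fun g hg hg_neg hβ => ?_⟩
  have hlog : logDeriv c (a + α * b) = g / c (a + α * b) := by rw [logDeriv_apply, hg.deriv]
  have hlog_nonpos : g / c (a + α * b) ≤ 0 := (div_neg_of_neg_of_pos hg_neg hcab).le
  rw [← inv_div, ← logDeriv_apply, logDeriv_tehranchiTransform hca, hlog] at hβ
  rw [neg_div, ← inv_div]
  exact mul_le_neg_inv_of_le_neg_inv_mul hα hlog_nonpos hβ

/-- Semigroup property of the transforms `𝕍`: `𝕍_{b,β} (𝕍_{a,α} c) = 𝕍_{a+α·b, α·β} c`.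
Furthermore, if `c` is differentiable at the relevant points with negative derivatives
`g₁ = c'(a)` and `g₂ = c'(a + α·b)`, and `α ≤ -c(a)/c'(a)` and
`β ≤ -(𝕍_{a,α}c)(b) / (d/dm)(𝕍_{a,α}c)(b)`, then `α·β ≤ -c(a + α·b)/c'(a + α·b)`. -/
theorem Vka_semigroup (c : ℝ → ℝ) (hc : TehranchiSpace c)
    (a b α β : ℝ) (ha : 0 ≤ a) (hb : 0 ≤ b) (hα : 0 ≤ α) (hβ : 0 ≤ β)
    (hca : 0 < c a) (hcab : 0 < c (a + α * b)) :
    (∀ m : ℝ, 0 ≤ m →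
      (c (a + α * (b + β * m)) / c a) / (c (a + α * b) / c a)
        = c (a + α * b + α * β * m) / c (a + α * b)) ∧
    (∀ g₁ g₂ : ℝ, HasDerivAt c g₁ a → HasDerivAt c g₂ (a + α * b) →
      g₁ < 0 → g₂ < 0 →
      α ≤ -c a / g₁ →
      β ≤ -((c (a + α * b) / c a) / deriv (fun m => c (a + α * m) / c a) b) →
      α * β ≤ -c (a + α * b) / g₂) := by
  have ⟨hcomp, hbound⟩ := Vka_semigroup_general (β := β) hα hca.ne' hcab
  exact ⟨fun m _ => congrFun hcomp m, fun _ g₂ _ hg₂ _ hneg _ hle => hbound g₂ hg₂ hneg hle⟩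
end

section
/- For every real z, it holds that 1 + z·R(z) - R(z)² < 0, where R(z) := Φ(z)/φ(z); equivalently, φ(z)² + z·Φ(z)·φ(z) - Φ(z)² < 0 for all real z. (Consequently, for each fixed x, the function v ↦ R(x + v)/(1 + v·R(x + v)) is decreasing on (0, ∞), attaining its supremum R(x) as v → 0.) -/
open MeasureTheory

/-- The standard normal probability density function. -/
noncomputable def phi (x : ℝ) : ℝ := Real.exp (-x ^ 2 / 2) / Real.sqrt (2 * Real.pi)

/-- The standard normal cumulative distribution function. -/
noncomputable def Phi (x : ℝ) : ℝ := ∫ t in Set.Iic x, phi t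

/-!
Put `Ψ = φ + x Φ`, so that `Ψ' = Φ`. The inequality `φ Ψ < Φ ^ 2` is then `Ψ'' Ψ < (Ψ') ^ 2`, i.e.
strict log-concavity of `Ψ`. Since `φ' = -x φ`, the following derivatives are each a positive
multiple of the preceding function:
`Φ' = φ`, `Ψ' = Φ`, `(Φ + x Ψ)' = 2 Ψ`, `(Φ ^ 2 - φ Ψ)' = φ (Φ + x Ψ)`.
All these functions vanish at `-∞`, because `φ` and `Φ` decay there faster than every power of `x`,
so positivity passes from each of them to the next.
-/

open Asymptotics Filter Topology

theorem lt_of_hasDerivAt_pos_of_tendsto_atBot {f f' : ℝ → ℝ} {a : ℝ}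
    (hf : ∀ x, HasDerivAt f (f' x) x) (hf' : ∀ x, 0 < f' x) (ha : Tendsto f atBot (𝓝 a)) (x : ℝ) :
    a < f x := by
  have hmono : StrictMono f := strictMono_of_hasDerivAt_pos hf hf'
  calc a ≤ f (x - 1) := hmono.monotone.le_of_tendsto ha (x - 1)
    _ < f x := hmono (sub_one_lt x)

theorem hasDerivAt_integral_Iic {E : Type*} [NormedAddCommGroup E] [NormedSpace ℝ E]
    [CompleteSpace E] {f : ℝ → E} {x : ℝ} (hf : Integrable f) (hx : ContinuousAt f x) :
    HasDerivAt (fun u ↦ ∫ t in Set.Iic u, f t) (f x) x := by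
  have hsplit (u : ℝ) : ∫ t in Set.Iic u, f t = (∫ t in Set.Iic x, f t) + ∫ t in x..u, f t := by
    rw [← intervalIntegral.integral_Iic_sub_Iic hf.integrableOn hf.integrableOn, add_sub_cancel]
  rw [funext hsplit]
  exact (intervalIntegral.integral_hasDerivAt_right hf.intervalIntegrable
    hf.aestronglyMeasurable.stronglyMeasurableAtFilter hx).const_add _

theorem tendsto_zero_of_superpolynomialDecay {α β : Type*} [TopologicalSpace β] [CommSemiring β]
    {l : Filter α} {k f : α → β} (hf : SuperpolynomialDecay l k f) : Tendsto f l (𝓝 0) := by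
  simpa only [pow_zero, one_mul] using hf 0

theorem superpolynomialDecay_integral_Iic {μ : Measure ℝ} {f : ℝ → ℝ}
    (hf : ∀ n : ℕ, Integrable (fun t ↦ t ^ n * f t) μ) :
    SuperpolynomialDecay atBot id (fun x ↦ ∫ t in Set.Iic x, f t ∂μ) := by
  intro n
  refine squeeze_zero_norm' ?_
    (tendsto_integral_Iic_zero (f := fun t ↦ ‖t ^ n * f t‖) (μ := μ) tendsto_id)
  filter_upwards [eventually_le_atBot 0] with x hx
  have hf₀ : Integrable f μ := by simpa only [pow_zero, one_mul] using hf 0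
  calc ‖x ^ n * ∫ t in Set.Iic x, f t ∂μ‖
      = ‖∫ t in Set.Iic x, x ^ n * f t ∂μ‖ := by rw [integral_const_mul]
    _ ≤ ∫ t in Set.Iic x, ‖x ^ n * f t‖ ∂μ := norm_integral_le_integral_norm _
    _ ≤ ∫ t in Set.Iic x, ‖t ^ n * f t‖ ∂μ := by
      refine setIntegral_mono_on (hf₀.const_mul _).norm.integrableOn (hf n).norm.integrableOn
        measurableSet_Iic fun t (ht : t ≤ x) ↦ ?_
      have habs : |x| ≤ |t| := by
        rw [abs_of_nonpos hx, abs_of_nonpos (ht.trans hx)]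
        exact neg_le_neg ht
      simp only [norm_mul, norm_pow, Real.norm_eq_abs]
      gcongr

theorem superpolynomialDecay_exp_neg_mul_sq {b : ℝ} (hb : 0 < b) :
    SuperpolynomialDecay (cocompact ℝ) id (fun x ↦ Real.exp (-b * x ^ 2)) := by
  rw [superpolynomialDecay_iff_abs_tendsto_zero]
  intro n
  refine (tendsto_rpow_abs_mul_exp_neg_mul_sq_cocompact hb n).congr fun x ↦ ?_
  rw [Real.rpow_natCast, abs_mul, abs_pow, Real.abs_exp, id_eq]

theorem phi_eq_const_mul (x : ℝ) :
    phi x = (Real.sqrt (2 * Real.pi))⁻¹ * Real.exp (-(1 / 2) * x ^ 2) := by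
  rw [phi, div_eq_inv_mul]
  ring_nf

theorem phi_pos (x : ℝ) : 0 < phi x := by
  unfold phi
  positivity

theorem continuous_phi : Continuous phi := by
  unfold phi
  fun_prop

theorem hasDerivAt_phi (x : ℝ) : HasDerivAt phi (-x * phi x) x := by
  have hexponent : HasDerivAt (fun x : ℝ ↦ -x ^ 2 / 2) (-x) x :=
    ((hasDerivAt_pow 2 x).neg.div_const 2).congr_deriv (by ring)
  exact (hexponent.exp.div_const _).congr_deriv (by rw [phi]; ring)

theorem integrable_pow_mul_phi (n : ℕ) : Integrable (fun x ↦ x ^ n * phi x) := by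
  have hn : (-1 : ℝ) < n := neg_one_lt_zero.trans_le n.cast_nonneg
  refine ((integrable_rpow_mul_exp_neg_mul_sq (b := 1 / 2) (by norm_num) hn).const_mul
    (Real.sqrt (2 * Real.pi))⁻¹).congr (.of_forall fun x ↦ ?_)
  simp only [Real.rpow_natCast, phi_eq_const_mul]
  ring

theorem integrable_phi : Integrable phi := by
  simpa only [pow_zero, one_mul] using integrable_pow_mul_phi 0

theorem superpolynomialDecay_phi : SuperpolynomialDecay atBot id phi := by
  have hexp : SuperpolynomialDecay atBot id (fun x : ℝ ↦ Real.exp (-(1 / 2) * x ^ 2)) := fun n ↦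
    (superpolynomialDecay_exp_neg_mul_sq (by norm_num) n).mono_left atBot_le_cocompact
  exact (hexp.const_mul _).congr fun x ↦ (phi_eq_const_mul x).symm

theorem hasDerivAt_Phi (x : ℝ) : HasDerivAt Phi (phi x) x :=
  hasDerivAt_integral_Iic integrable_phi continuous_phi.continuousAt

theorem superpolynomialDecay_Phi : SuperpolynomialDecay atBot id Phi :=
  superpolynomialDecay_integral_Iic integrable_pow_mul_phi

theorem Phi_pos (x : ℝ) : 0 < Phi x :=
  lt_of_hasDerivAt_pos_of_tendsto_atBot hasDerivAt_Phi phi_pos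
    (tendsto_zero_of_superpolynomialDecay superpolynomialDecay_Phi) x

/-- The antiderivative of `Phi` vanishing at `-∞`; probabilistically, `Psi x` is the expectation of
`max (x - X) 0` for a standard normal variable `X`. -/
noncomputable def Psi (x : ℝ) : ℝ := phi x + x * Phi x

theorem hasDerivAt_Psi (x : ℝ) : HasDerivAt Psi (Phi x) x :=
  ((hasDerivAt_phi x).add ((hasDerivAt_id x).mul (hasDerivAt_Phi x))).congr_deriv
    (by simp only [id_eq]; ring)

theorem superpolynomialDecay_Psi : SuperpolynomialDecay atBot id Psi :=
  superpolynomialDecay_phi.add superpolynomialDecay_Phi.param_mul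

theorem Psi_pos (x : ℝ) : 0 < Psi x :=
  lt_of_hasDerivAt_pos_of_tendsto_atBot hasDerivAt_Psi Phi_pos
    (tendsto_zero_of_superpolynomialDecay superpolynomialDecay_Psi) x

theorem Phi_add_mul_Psi_pos (x : ℝ) : 0 < Phi x + x * Psi x := by
  have hderiv (y : ℝ) : HasDerivAt (fun y ↦ Phi y + y * Psi y) (2 * Psi y) y :=
    ((hasDerivAt_Phi y).add ((hasDerivAt_id y).mul (hasDerivAt_Psi y))).congr_deriv
      (by simp only [id_eq, Psi]; ring)
  have hlim : Tendsto (fun y ↦ Phi y + y * Psi y) atBot (𝓝 0) :=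
    tendsto_zero_of_superpolynomialDecay
      (superpolynomialDecay_Phi.add superpolynomialDecay_Psi.param_mul)
  exact lt_of_hasDerivAt_pos_of_tendsto_atBot hderiv (fun y ↦ mul_pos two_pos (Psi_pos y)) hlim x

theorem phi_mul_Psi_lt_Phi_sq (x : ℝ) : phi x * Psi x < Phi x ^ 2 := by
  have hderiv (y : ℝ) :
      HasDerivAt (fun y ↦ Phi y ^ 2 - phi y * Psi y) (phi y * (Phi y + y * Psi y)) y :=
    (((hasDerivAt_Phi y).pow 2).sub ((hasDerivAt_phi y).mul (hasDerivAt_Psi y))).congr_deriv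
      (by ring)
  have hlim : Tendsto (fun y ↦ Phi y ^ 2 - phi y * Psi y) atBot (𝓝 0) := by
    simpa using ((tendsto_zero_of_superpolynomialDecay superpolynomialDecay_Phi).pow 2).sub
      (tendsto_zero_of_superpolynomialDecay
        (superpolynomialDecay_phi.mul superpolynomialDecay_Psi))
  exact sub_pos.mp <| lt_of_hasDerivAt_pos_of_tendsto_atBot hderiv
    (fun y ↦ mul_pos (phi_pos y) (Phi_add_mul_Psi_pos y)) hlim x

/-- With `R(z) = Φ(z)/φ(z)`, for every real `z` it holds `1 + z·R(z) - R(z)² < 0`;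
equivalently `φ(z)² + z·Φ(z)·φ(z) - Φ(z)² < 0`. -/
theorem mills_ratio_inequality (z : ℝ) :
    1 + z * (Phi z / phi z) - (Phi z / phi z) ^ 2 < 0 ∧
    phi z ^ 2 + z * Phi z * phi z - Phi z ^ 2 < 0 := by
  have hphi : 0 < phi z := phi_pos z
  have hprod : phi z ^ 2 + z * Phi z * phi z - Phi z ^ 2 < 0 :=
    calc phi z ^ 2 + z * Phi z * phi z - Phi z ^ 2 = phi z * Psi z - Phi z ^ 2 := by
          rw [Psi]; ring
      _ < 0 := sub_neg.mpr (phi_mul_Psi_lt_Phi_sq z)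
  refine ⟨?_, hprod⟩
  calc 1 + z * (Phi z / phi z) - (Phi z / phi z) ^ 2
      = (phi z ^ 2 + z * Phi z * phi z - Phi z ^ 2) / phi z ^ 2 := by field_simp
    _ < 0 := div_neg_of_neg_of_pos hprod (by positivity)
end
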